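/- Let G be a DAG containing no active cycle, let X, Y, Z ⊆ V be disjoint with TRAILS(X,Y,Z) ≠ ∅, and let T be a minimal element of TRAILS(X,Y,Z) with respect to <_TRAIL, with converging nodes c_1, …, c_C. If for some i the arc c_{i+1} → c_i belongs to E and c_i ∈ Z, then c_{i+1} ∈ Z. -/

import Mathlib

open scoped Classical

/-- `E` is the arc relation of a (finite) directed acyclic graph: there are no
directed cycles (hence also no loops and no pairs of opposite arcs). -/
def IsDAG {V : Type*} (E : V → V → Prop) : Prop :=
  ∀ v : V, ¬ Relation.TransGen E v v

/-- `d` is a descendant of `v`: there is a (nonempty) directed path from `v` to `d`. -/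
def Desc {V : Type*} (E : V → V → Prop) (v d : V) : Prop :=
  Relation.TransGen E v d

/-- A trail: a sequence of `len + 1` pairwise distinct nodes
`f 0, f 1, …, f len`, consecutive ones joined by an arc of `E`
in one of the two possible directions.  Its length is `len`. -/
structure Trail (V : Type*) (E : V → V → Prop) where
  len : ℕ
  f : ℕ → V
  arcs : ∀ i, i < len → E (f i) (f (i + 1)) ∨ E (f (i + 1)) (f i)
  inj : ∀ i, i ≤ len → ∀ j, j ≤ len → f i = f j → i = j

namespace Trail

variable {V : Type*} {E : V → V → Prop}

/-- The trail has a converging connection at the interior index `i`: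
`f (i-1) → f i ← f (i+1)`. -/
def ConvAt (T : Trail V E) (i : ℕ) : Prop :=
  0 < i ∧ i < T.len ∧ E (T.f (i - 1)) (T.f i) ∧ E (T.f (i + 1)) (T.f i)

/-- The trail is activated by `Z`: every interior converging node is in `Z` or has a
descendant in `Z`, and every interior non-converging node is not in `Z`. -/
def ActivatedBy (T : Trail V E) (Z : Set V) : Prop :=
  ∀ i, 0 < i → i < T.len →
    (T.ConvAt i → (T.f i ∈ Z ∨ ∃ d ∈ Z, Desc E (T.f i) d)) ∧
    (¬ T.ConvAt i → T.f i ∉ Z)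

/-- The trail has a chord: an arc of `E` between two non-consecutive nodes. -/
def HasChord (T : Trail V E) : Prop :=
  ∃ i j, i + 1 < j ∧ j ≤ T.len ∧ (E (T.f i) (T.f j) ∨ E (T.f j) (T.f i))

end Trail

/-- `E` contains an active cycle: a closed trail
`v ← x 0 ⇄ x 1 ⇄ ⋯ ⇄ x n ⇄ x (n+1) → v` (so `w = x 0` and `z = x (n+1)` are
distinct parents of `v`), with `n ≥ 1`, such that the trail
`x 0 ⇄ ⋯ ⇄ x (n+1)` has no converging connection and the closed trail has no chords. -/
def HasActiveCycle {V : Type*} (E : V → V → Prop) : Prop :=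
  ∃ (v : V) (n : ℕ) (x : ℕ → V),
    1 ≤ n ∧
    E (x 0) v ∧ E (x (n + 1)) v ∧
    (∀ i, i ≤ n + 1 → x i ≠ v) ∧
    (∀ i, i ≤ n + 1 → ∀ j, j ≤ n + 1 → x i = x j → i = j) ∧
    (∀ i, i < n + 1 → E (x i) (x (i + 1)) ∨ E (x (i + 1)) (x i)) ∧
    (∀ i, 0 < i → i < n + 1 → ¬ (E (x (i - 1)) (x i) ∧ E (x (i + 1)) (x i))) ∧
    (∀ i j, i + 1 < j → j ≤ n + 1 → ¬ (i = 0 ∧ j = n + 1) →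
      ¬ E (x i) (x j) ∧ ¬ E (x j) (x i)) ∧
    (∀ i, 1 ≤ i → i ≤ n → ¬ E v (x i) ∧ ¬ E (x i) v)

/-- A descendant path from `c` to `Z` with `n` intermediate nodes:
`c = d 0 → d 1 → ⋯ → d n → d (n+1) ∈ Z`, with `d j ∉ Z` for all `j ≤ n`. -/
def IsDescPath {V : Type*} (E : V → V → Prop) (Z : Set V) (c : V) (d : ℕ → V) (n : ℕ) :
    Prop :=
  d 0 = c ∧ d (n + 1) ∈ Z ∧ (∀ j, j ≤ n → d j ∉ Z) ∧ (∀ j, j ≤ n → E (d j) (d (j + 1)))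

/-- `n_Z(c)`: the least number of intermediate nodes of a descendant path from `c` to `Z`
(this is `0` when `c ∈ Z`, since then no descendant path exists and `sInf ∅ = 0`). -/
noncomputable def nZ {V : Type*} (E : V → V → Prop) (Z : Set V) (c : V) : ℕ :=
  sInf {n | ∃ d : ℕ → V, IsDescPath E Z c d n}

namespace Trail

variable {V : Type*} {E : V → V → Prop}

/-- The set of (interior) indices of `T` carrying a converging connection. -/
noncomputable def convIdx (T : Trail V E) : Finset ℕ :=
  (Finset.Ioo 0 T.len).filter fun i => T.ConvAt i

/-- The weight vector `(|{c₁,…,c_C} \ Z|, C, Σᵢ n_Z(i), Σᵢ n_t(i))` of a trail,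
whose lexicographic comparison induces the order `<_TRAIL`.  (The total length
of the subtrails, `Σᵢ n_t(i)`, equals `len - 1 - C`.) -/
noncomputable def weight (T : Trail V E) (Z : Set V) : ℕ × ℕ × ℕ × ℕ :=
  ((T.convIdx.filter fun i => T.f i ∉ Z).card,
   T.convIdx.card,
   ∑ i ∈ T.convIdx, nZ E Z (T.f i),
   T.len - 1 - T.convIdx.card)

end Trail

/-- Strict lexicographic order on `ℕ × ℕ × ℕ × ℕ`. -/
def LexLt4 (a b : ℕ × ℕ × ℕ × ℕ) : Prop :=
  a.1 < b.1 ∨ (a.1 = b.1 ∧ (a.2.1 < b.2.1 ∨ (a.2.1 = b.2.1 ∧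
    (a.2.2.1 < b.2.2.1 ∨ (a.2.2.1 = b.2.2.1 ∧ a.2.2.2 < b.2.2.2)))))

/-- `T ∈ TRAILS(X, Y, Z)`: `T` is a trail from a node of `X` to a node of `Y`
activated by `Z`. -/
def InTRAILS {V : Type*} {E : V → V → Prop} (T : Trail V E) (X Y Z : Set V) : Prop :=
  T.f 0 ∈ X ∧ T.f T.len ∈ Y ∧ T.ActivatedBy Z

/-- `T` is a minimal element of `TRAILS(X, Y, Z)` with respect to `<_TRAIL`. -/
def MinimalTrail {V : Type*} {E : V → V → Prop} (T : Trail V E) (X Y Z : Set V) : Prop :=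
  InTRAILS T X Y Z ∧
    ∀ T' : Trail V E, InTRAILS T' X Y Z → ¬ LexLt4 (T'.weight Z) (T.weight Z)

namespace Trail

variable {V : Type*} {E : V → V → Prop}

/-- The trail obtained from `T` by replacing its part between the indices `a` and `a + 1 + k`
by a single arc `T.f (a + 1 + k) → T.f a`. -/
def shortcut (T : Trail V E) (a k : ℕ) (hk : a + 1 + k ≤ T.len)
    (hE : E (T.f (a + 1 + k)) (T.f a)) : Trail V E where
  len := T.len - k
  f i := T.f (if i ≤ a then i else i + k)
  arcs i hi := by
    rcases lt_trichotomy i a with h | rfl | h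
    · simpa [h.le, Nat.succ_le_of_lt h] using T.arcs i (by omega)
    · simpa using Or.inr hE
    · simpa [h.not_ge, (h.trans (Nat.lt_succ_self i)).not_ge, Nat.add_right_comm i 1 k]
        using T.arcs (i + k) (by omega)
  inj i hi j hj hij := by
    have := T.inj _ (by split_ifs <;> omega) _ (by split_ifs <;> omega) hij
    split_ifs at this <;> omega

/-- When `a` and `a + 1 + k` are converging in `T`, the converging indices of the shortcut
are those of `T` on the retained nodes, except for `a + 1 + k`. -/
theorem convAt_shortcut_iff (hdag : IsDAG E) (T : Trail V E) {a k : ℕ}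
    (ha : T.ConvAt a) (hb : T.ConvAt (a + 1 + k)) (hE : E (T.f (a + 1 + k)) (T.f a)) (i : ℕ) :
    (T.shortcut a k hb.2.1.le hE).ConvAt i ↔
      i ≠ a + 1 ∧ T.ConvAt (if i ≤ a then i else i + k) := by
  have hlen := hb.2.1
  rcases lt_trichotomy i a with h | rfl | h
  · have h1 : i - 1 ≤ a := by omega
    have h2 : i + 1 ≤ a := h
    have h3 : i ≠ a + 1 := by omega
    have h4 : i < T.len - k ↔ i < T.len := by omega
    simp [ConvAt, shortcut, h.le, h1, h2, h3, h4]
  · have h1 : i < T.len - k := by omega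
    obtain ⟨h2, h3, h4, h5⟩ := ha
    simp [ConvAt, shortcut, h1, h2, h3, h4, h5, hE]
  · obtain rfl | h' := Nat.eq_or_lt_of_le (Nat.succ_le_of_lt h)
    · have h1 : ¬ E (T.f a) (T.f (a + 1 + k)) := fun h1 =>
        hdag _ (.tail (.single h1) hE)
      simp [ConvAt, shortcut, h1]
    · have h1 : ¬ i - 1 ≤ a := by omega
      have h2 : ¬ i + 1 ≤ a := by omega
      have h3 : i ≠ a + 1 := by omega
      have h4 : i < T.len - k ↔ i + k < T.len := by omega
      have h5 : i - 1 + k = i + k - 1 := by omega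
      have h6 : i + 1 + k = i + k + 1 := by omega
      have h7 : 0 < i ↔ 0 < i + k := by omega
      simp only [ConvAt, shortcut, h.not_ge, h1, h2, h3, h4, h5, h6, h7, if_false, ne_eq,
        not_false_eq_true, true_and]

end Trail

/-- For a minimal trail `T` of `TRAILS(X,Y,Z)`: if `cᵢ₊₁ → cᵢ ∈ E`
for consecutive converging nodes and `cᵢ ∈ Z`, then `cᵢ₊₁ ∈ Z`. -/
theorem minimal_trail_arc_backward_in_Z
    {V : Type*} [Fintype V] (E : V → V → Prop) (hdag : IsDAG E)
    (hnac : ¬ HasActiveCycle E) (X Y Z : Set V)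
    (hXY : Disjoint X Y) (hXZ : Disjoint X Z) (hYZ : Disjoint Y Z)
    (hne : ∃ T₀ : Trail V E, InTRAILS T₀ X Y Z)
    (T : Trail V E) (hT : MinimalTrail T X Y Z) :
    ∀ a b, T.ConvAt a → T.ConvAt b → a < b →
      (∀ i, a < i → i < b → ¬ T.ConvAt i) →
      E (T.f b) (T.f a) → T.f a ∈ Z → T.f b ∈ Z := by
  intro a b ha hb hab _ hE _
  obtain ⟨k, rfl⟩ : ∃ k, b = a + 1 + k := Nat.exists_eq_add_of_le hab
  by_contra hbZ
  have hlen := hb.2.1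
  obtain ⟨⟨hX, hY, hact⟩, hmin⟩ := hT
  have hconv := T.convAt_shortcut_iff hdag ha hb hE
  refine hmin (T.shortcut a k hlen.le hE) ⟨?_, ?_, ?_⟩ (Or.inl ?_)
  · simpa [Trail.shortcut] using hX
  · have h1 : ¬ T.len - k ≤ a := by omega
    have h2 : T.len - k + k = T.len := by omega
    simpa [Trail.shortcut, h1, h2] using hY
  · intro i hi hi'
    change i < T.len - k at hi'
    have h := hact (if i ≤ a then i else i + k) (by split_ifs <;> omega)
      (by split_ifs <;> omega)
    rw [hconv]
    refine ⟨fun hc => h.1 hc.2, fun hc => ?_⟩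
    by_cases hia : i = a + 1
    · subst hia
      simpa [Trail.shortcut] using hbZ
    · exact h.2 fun h' => hc ⟨hia, h'⟩
  · have hmem : a + 1 + k ∈ T.convIdx.filter fun i => T.f i ∉ Z := by
      simp [Trail.convIdx, hlen, hb, hbZ]
    dsimp only [Trail.weight]
    refine lt_of_le_of_lt (Finset.card_le_card_of_injOn
      (fun i => if i ≤ a then i else i + k) ?_ ?_) (Finset.card_erase_lt_of_mem hmem)
    · intro i hi
      simp only [Trail.convIdx, Finset.coe_filter, Finset.mem_filter, Set.mem_ofPred_eq] at hi
      obtain ⟨⟨-, hc⟩, hZ⟩ := hi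
      obtain ⟨hia, hc⟩ := (hconv i).1 hc
      simp only [Finset.mem_coe, Finset.mem_erase, Trail.convIdx, Finset.mem_filter,
        Finset.mem_Ioo]
      exact ⟨by split_ifs <;> omega, ⟨⟨hc.1, hc.2.1⟩, hc⟩, hZ⟩
    · intro i _ j _ hij
      dsimp only at hij
      split_ifs at hij <;> omega
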